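/- The polynomial 1 − x − x³ has a unique real zero ρ₂ in the interval (0,1), and ρ₂ > 1/2. Moreover, a_n^{(2)} ∼ κ₂ ρ₂^{−n} as n → ∞, i.e., lim_{n→∞} a_n^{(2)} ρ₂^{n} = κ₂, where κ₂ = (2ρ₂ − 1) / ((1 − ρ₂)²(1 + 3ρ₂²)). -/

import Mathlib

/-- `π` avoids the pattern 132: there are no indices `i < j < k` with `π i < π k < π j`. -/
def Avoids132 {n : ℕ} (π : Equiv.Perm (Fin n)) : Prop :=
  ¬ ∃ i j k : Fin n, i < j ∧ j < k ∧ π i < π k ∧ π k < π j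

/-- `π` is `m`-bounded: adjacent entries differ by at most `m`. -/
def MBounded (m : ℕ) {n : ℕ} (π : Equiv.Perm (Fin n)) : Prop :=
  ∀ i : ℕ, ∀ h : i + 1 < n,
    |(((π ⟨i + 1, h⟩ : Fin n) : ℕ) : ℤ) - (((π ⟨i, by omega⟩ : Fin n) : ℕ) : ℤ)| ≤ (m : ℤ)

/-- `a_n^{(m)}`: the number of `m`-bounded 132-avoiding permutations of length `n`. -/
noncomputable def aCount (m n : ℕ) : ℕ :=
  Nat.card {π : Equiv.Perm (Fin n) // Avoids132 π ∧ MBounded m π}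


/-- List version of 132-avoidance. -/
def Av : List ℕ → Prop
  | [] => True
  | a :: l => l.Pairwise (fun y z => ¬ (a < z ∧ z < y)) ∧ Av l

/-- Valid lists. -/
def V (n : ℕ) (l : List ℕ) : Prop :=
  l.Perm (List.range n) ∧ Av l ∧ l.IsChain (fun a b => a ≤ b + 2 ∧ b ≤ a + 2)

theorem Av_iff (l : List ℕ) : Av l ↔ ∀ i j k : ℕ, ∀ (_ : i < j) (_ : j < k) (hk : k < l.length),
    ¬ (l[i] < l[k] ∧ l[k] < l[j]) := by
  induction l with
  | nil => simp [Av]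
  | cons a l ih =>
    rw [Av, ih, List.pairwise_iff_getElem]
    constructor
    · rintro ⟨h1, h2⟩ i j k hij hjk hk
      obtain ⟨j, rfl⟩ : ∃ j', j = j' + 1 := ⟨j - 1, by omega⟩
      obtain ⟨k, rfl⟩ : ∃ j', k = j' + 1 := ⟨k - 1, by omega⟩
      simp only [List.length_cons] at hk
      rcases i with _ | i
      · simpa using h1 j k (by omega) (by omega) (by omega)
      · simpa using h2 i j k (by omega) (by omega) (by omega)
    · intro h
      refine ⟨fun j k hj hk hjk => ?_, fun i j k hij hjk hk => ?_⟩
      · exact h 0 (j+1) (k+1) (by omega) (by omega) (by simpa using hk)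
      · exact h (i+1) (j+1) (k+1) (by omega) (by omega) (by simpa using hk)

theorem Av_append {s t : List ℕ} (h : Av (s ++ t)) : Av s ∧ Av t := by
  induction s with
  | nil => exact ⟨trivial, h⟩
  | cons a s ih =>
    simp only [List.cons_append, Av, List.pairwise_append] at h ⊢
    exact ⟨⟨h.1.1, (ih h.2).1⟩, (ih h.2).2⟩

theorem Av_snoc {s : List ℕ} {n : ℕ} (hs : ∀ x ∈ s, x ≤ n) (h : Av s) : Av (s ++ [n]) := by
  induction s with
  | nil => simp [Av]
  | cons a s ih =>
    simp only [List.cons_append, Av, List.pairwise_append] at h ⊢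
    refine ⟨⟨h.1, by simp, ?_⟩, ih (fun x hx => hs x (by simp [hx])) h.2⟩
    intro y hy z hz
    simp at hz
    have := hs y (by simp [hy])
    omega

theorem Av_mid {s t : List ℕ} {n : ℕ} (h : Av (s ++ n :: t)) (ht : ∀ x ∈ t, x < n) :
    ∀ x ∈ s, ∀ z ∈ t, z ≤ x := by
  induction s with
  | nil => simp
  | cons a s ih =>
    simp only [List.cons_append, Av, List.pairwise_append, List.pairwise_cons] at h
    intro x hx z hz
    rcases List.mem_cons.1 hx with rfl | hx
    · have := h.1.2.1.1 z hz
      have := ht z hz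
      omega
    · exact ih h.2 x hx z hz

theorem V.lt {n l} (h : V n l) {x : ℕ} (hx : x ∈ l) : x < n := by
  simpa using h.1.subset hx

theorem V.nodup {n l} (h : V n l) : l.Nodup := h.1.nodup_iff.2 List.nodup_range

theorem V.mem {n l} (h : V n l) {x : ℕ} (hx : x < n) : x ∈ l :=
  h.1.symm.subset (by simpa using hx)

theorem perm_cons (n : ℕ) (l : List ℕ) :
    (n :: l).Perm (List.range (n + 1)) ↔ l.Perm (List.range n) := by
  rw [List.range_succ]
  have : (List.range n ++ [n]).Perm (n :: List.range n) := List.perm_append_singleton _ _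
  constructor
  · intro h; exact (List.perm_cons n).1 (h.trans this)
  · intro h; exact ((List.perm_cons n).2 h).trans this.symm

theorem perm_snoc (n : ℕ) (l : List ℕ) :
    (l ++ [n]).Perm (List.range (n + 1)) ↔ l.Perm (List.range n) := by
  rw [← perm_cons n l]
  exact (List.perm_append_singleton n l).congr_left _

theorem V_cons (n : ℕ) (t : List ℕ) :
    V (n + 1) (n :: t) ↔ V n t ∧ ∀ x ∈ t.head?, n ≤ x + 2 := by
  constructor
  · rintro ⟨h1, h2, h3⟩
    rw [perm_cons] at h1
    rw [List.isChain_cons] at h3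
    exact ⟨⟨h1, h2.2, h3.2⟩, fun x hx => (h3.1 x hx).1⟩
  · rintro ⟨h, h'⟩
    refine ⟨(perm_cons _ _).2 h.1, ⟨?_, h.2.1⟩, ?_⟩
    · refine List.Pairwise.imp_of_mem (R := fun _ _ => True) ?_ (List.pairwise_of_forall (fun _ _ => trivial))
      intro a b _ hb _
      have := h.lt hb
      omega
    · rw [List.isChain_cons]
      refine ⟨fun y hy => ⟨h' y hy, ?_⟩, h.2.2⟩
      have := h.lt (List.mem_of_mem_head? hy)
      omega

theorem V_snoc (n : ℕ) (s : List ℕ) :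
    V (n + 1) (s ++ [n]) ↔ V n s ∧ ∀ x ∈ s.getLast?, n ≤ x + 2 := by
  constructor
  · rintro ⟨h1, h2, h3⟩
    rw [perm_snoc] at h1
    rw [List.isChain_append] at h3
    exact ⟨⟨h1, (Av_append h2).1, h3.1⟩, fun x hx => (h3.2.2 x hx n (by simp)).2⟩
  · rintro ⟨h, h'⟩
    refine ⟨(perm_snoc _ _).2 h.1, Av_snoc (fun x hx => (h.lt hx).le) h.2.1, ?_⟩
    rw [List.isChain_append]
    refine ⟨h.2.2, by simp, fun x hx y hy => ?_⟩
    have := h' x hx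
    have := h.lt (List.mem_of_getLast? hx)
    simp at hy
    omega

theorem V_mid (n : ℕ) (u : List ℕ) :
    V (n + 3) ((n + 1) :: (n + 2) :: n :: u) ↔ V (n + 1) (n :: u) := by
  have hp : ((n + 1) :: (n + 2) :: n :: u).Perm (List.range (n + 3)) ↔
      (n :: u).Perm (List.range (n + 1)) := by
    rw [← perm_cons (n + 1), ← perm_cons (n + 2)]
    exact (List.Perm.swap _ _ _).congr_left _
  constructor
  · rintro ⟨h1, h2, h3⟩
    exact ⟨hp.1 h1, h2.2.2, (List.isChain_cons.1 (List.isChain_cons.1 h3).2).2⟩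
  · intro h
    refine ⟨hp.2 h.1, ⟨?_, ?_, h.2.1⟩, ?_⟩
    · rw [List.pairwise_cons]
      constructor
      · intro z hz
        have := h.lt hz
        omega
      · refine List.Pairwise.imp_of_mem (R := fun _ _ => True) ?_ (List.pairwise_of_forall (fun _ _ => trivial))
        intro a b _ hb _
        have := h.lt hb
        omega
    · refine List.Pairwise.imp_of_mem (R := fun _ _ => True) ?_ (List.pairwise_of_forall (fun _ _ => trivial))
      intro a b _ hb _
      have := h.lt hb
      omega
    · rw [List.isChain_cons, List.isChain_cons]
      refine ⟨?_, ?_, h.2.2⟩ <;> simp <;> omega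

/-- The middle case. -/
theorem V_middle {n : ℕ} {s t : List ℕ} (h : V (n + 1) (s ++ n :: t)) (hs : s ≠ []) (ht : t ≠ []) :
    ∃ m u, n = m + 2 ∧ s = [m + 1] ∧ t = m :: u := by
  obtain ⟨x, t, rfl⟩ := List.exists_cons_of_ne_nil ht
  have hnd := h.nodup
  rw [List.nodup_append] at hnd
  obtain ⟨hn1, hn2, hn3⟩ := hnd
  have hnt : ∀ z ∈ x :: t, z < n := by
    intro z hz
    have h1 := h.lt (x := z) (by simp only [List.mem_append, List.mem_cons] at hz ⊢; tauto)
    have : z ≠ n := by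
      rintro rfl
      exact (List.nodup_cons.1 hn2).1 hz
    omega
  have hmid := Av_mid h.2.1 hnt
  have hns : ∀ z ∈ s, z < n ∧ x < z := by
    intro z hz
    have h1 := h.lt (x := z) (by simp [hz])
    have h2 := hn3 z hz n (by simp)
    have h3 := hn3 z hz x (by simp)
    have h4 := hmid z hz x (by simp)
    omega
  have hx : n ≤ x + 2 := by
    have := (List.isChain_append.1 h.2.2).2.1
    rw [List.isChain_cons] at this
    exact (this.1 x (by simp)).1
  obtain ⟨y, s, rfl⟩ := List.exists_cons_of_ne_nil hs
  have hy := hns y (by simp)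
  refine ⟨x, t, by omega, ?_, rfl⟩
  have : s = [] := by
    rw [List.eq_nil_iff_forall_not_mem]
    intro z hz
    have := hns z (by simp [hz])
    have : y ≠ z := by
      rintro rfl
      exact (List.nodup_cons.1 hn1).1 hz
    omega
  subst this
  simp; omega

/-- Trichotomy. -/
theorem V_cases {n : ℕ} {l : List ℕ} (h : V (n + 1) l) :
    (∃ t, l = n :: t) ∨ (∃ s, s ≠ [] ∧ l = s ++ [n]) ∨
      ∃ m u, n = m + 2 ∧ l = (m + 1) :: (m + 2) :: m :: u := by
  obtain ⟨s, t, rfl⟩ := List.append_of_mem (h.mem (x := n) (by omega))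
  by_cases hs : s = []
  · left; exact ⟨t, by simp [hs]⟩
  by_cases ht : t = []
  · right; left; exact ⟨s, hs, by simp [ht]⟩
  obtain ⟨m, u, rfl, rfl, rfl⟩ := V_middle h hs ht
  right; right; exact ⟨m, u, rfl, rfl⟩

/-- The special lists. -/
def F : ℕ → List ℕ
  | 0 => []
  | 1 => [0]
  | n + 2 => n :: (F n ++ [n + 1])

theorem V_zero (l : List ℕ) : V 0 l ↔ l = [] := by
  constructor
  · intro h; simpa using h.1
  · rintro rfl; simp [V, Av]

theorem F_last (n : ℕ) : ∀ x ∈ (F n).getLast?, n = x + 1 := by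
  match n with
  | 0 => simp [F]
  | 1 => simp [F]
  | n + 2 =>
    intro x hx
    rw [F, ← List.cons_append, List.getLast?_concat] at hx
    simp at hx
    omega

theorem F_head (n : ℕ) : ∀ x ∈ (F n).head?, n ≤ x + 2 := by
  match n with
  | 0 => simp [F]
  | 1 => simp [F]
  | n + 2 => simp [F]

theorem V_cons_F (n : ℕ) (h : V n (F n)) : V (n + 1) (n :: F n) := by
  rw [V_cons]
  exact ⟨h, F_head n⟩

theorem cons_F_last (n : ℕ) : ∀ x ∈ (n :: F n).getLast?, n + 1 ≤ x + 2 := by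
  intro x hx
  rw [List.getLast?_cons] at hx
  cases hl : (F n).getLast? with
  | none => simp [hl] at hx; omega
  | some y =>
    have := F_last n y hl
    simp [hl] at hx
    omega

theorem V_F (n : ℕ) : V n (F n) := by
  induction n using Nat.twoStepInduction with
  | zero => simp [V_zero, F]
  | one => 
    have := (V_cons 0 []).2 ⟨(V_zero _).2 rfl, by simp⟩
    simpa [F] using this
  | more n ih _ =>
    rw [F, ← List.cons_append, V_snoc]
    exact ⟨V_cons_F n ih, cons_F_last n⟩

/-- Uniqueness of the special list. -/
theorem F_unique (n : ℕ) : ∀ s : List ℕ, V (n + 1) (n :: s) →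
    (∀ x ∈ (n :: s).getLast?, n + 1 ≤ x + 2) → s = F n := by
  induction n using Nat.strong_induction_on with
  | _ n ih =>
    intro s h hl
    rw [V_cons] at h
    obtain ⟨h, hh⟩ := h
    rcases List.eq_nil_or_concat' s with rfl | ⟨s, x, rfl⟩
    · cases n with
      | zero => rfl
      | succ n => simpa using h.mem (x := 0) (by omega)
    · have hx := hl x (by rw [← List.cons_append, List.getLast?_concat]; rfl)
      have hx' := h.lt (x := x) (by simp)
      obtain rfl : n = x + 1 := by omega
      rcases s with _ | ⟨y, s⟩
      · have := h.1.length_eq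
        simp at this
        subst this
        rfl
      · have hy := hh y (by simp)
        have hy' := h.lt (x := y) (by simp)
        have hyx : y ≠ x := by
          have := h.nodup
          simp at this
          tauto
        obtain rfl : x = y + 1 := by omega
        rw [V_snoc] at h
        rw [ih y (by omega) s h.1 h.2]
        rfl

def Bw (n : ℕ) : Set (List ℕ) := {t | V (n + 1) (n :: t)}
def Ew (n : ℕ) : Set (List ℕ) := {s | V (n + 1) (s ++ [n])}
def Aw (n : ℕ) : Set (List ℕ) := {l | V n l}

theorem Bw_rec (n : ℕ) : Bw (n + 3) = (fun t => (n + 2) :: t) '' Bw (n + 2) ∪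
    ((fun u => (n + 1) :: (n + 2) :: n :: u) '' Bw n ∪ {(n + 1) :: (F (n + 1) ++ [n + 2])}) := by
  ext l
  simp only [Bw, Set.mem_union, Set.mem_image, Set.mem_ofPred_eq, Set.mem_singleton_iff]
  constructor
  · intro h
    rw [V_cons] at h
    obtain ⟨h, hh⟩ := h
    rcases V_cases h with ⟨t, rfl⟩ | ⟨s, hs, rfl⟩ | ⟨m, u, hm, rfl⟩
    · exact Or.inl ⟨t, h, rfl⟩
    · right; right
      obtain ⟨x, s, rfl⟩ := List.exists_cons_of_ne_nil hs
      have hx := hh x (by simp)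
      rw [V_snoc] at h
      have hx' := h.1.lt (x := x) (by simp)
      obtain rfl : x = n + 1 := by omega
      rw [F_unique (n + 1) s h.1 h.2]
      rfl
    · obtain rfl : n = m := by omega
      right; left
      exact ⟨u, (V_mid _ _).1 h, rfl⟩
  · rintro (⟨t, h, rfl⟩ | ⟨u, h, rfl⟩ | rfl)
    · rw [V_cons]; exact ⟨h, by simp⟩
    · rw [V_cons]; exact ⟨(V_mid _ _).2 h, by simp⟩
    · rw [V_cons, ← List.cons_append, V_snoc]
      exact ⟨⟨V_cons_F _ (V_F _), cons_F_last _⟩, by simp⟩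

theorem Ew_rec (n : ℕ) : Ew (n + 2) = (fun t => t ++ [n + 1]) '' Ew (n + 1) ∪
    {(n + 1) :: F (n + 1)} := by
  ext l
  simp only [Ew, Set.mem_union, Set.mem_image, Set.mem_ofPred_eq, Set.mem_singleton_iff]
  constructor
  · intro h
    rw [V_snoc] at h
    obtain ⟨h, hh⟩ := h
    rcases V_cases h with ⟨t, rfl⟩ | ⟨s, hs, rfl⟩ | ⟨m, u, hm, rfl⟩
    · right; rw [F_unique _ _ h hh]
    · exact Or.inl ⟨s, h, rfl⟩
    · exfalso
      obtain rfl : n = m + 1 := by omega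
      have h' := (V_mid _ _).1 h
      rw [List.getLast?_cons_cons, List.getLast?_cons_cons] at hh
      have hne : (m :: u) ≠ [] := by simp
      have h1 := hh _ (List.getLast?_eq_some_getLast hne)
      have h2 := h'.lt (List.getLast_mem hne)
      omega
  · rintro (⟨t, h, rfl⟩ | rfl)
    · rw [V_snoc]; exact ⟨h, by simp⟩
    · rw [V_snoc]; exact ⟨V_cons_F _ (V_F _), cons_F_last _⟩

theorem Aw_rec (n : ℕ) : Aw (n + 3) = (fun t => (n + 2) :: t) '' Bw (n + 2) ∪
    ((fun u => (n + 1) :: (n + 2) :: n :: u) '' Bw n ∪ (fun s => s ++ [n + 2]) '' Ew (n + 2)) := by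
  ext l
  simp only [Aw, Bw, Ew, Set.mem_union, Set.mem_image, Set.mem_ofPred_eq]
  constructor
  · intro h
    rcases V_cases h with ⟨t, rfl⟩ | ⟨s, hs, rfl⟩ | ⟨m, u, hm, rfl⟩
    · exact Or.inl ⟨t, h, rfl⟩
    · exact Or.inr (Or.inr ⟨s, h, rfl⟩)
    · obtain rfl : n = m := by omega
      exact Or.inr (Or.inl ⟨u, (V_mid _ _).1 h, rfl⟩)
  · rintro (⟨t, h, rfl⟩ | ⟨u, h, rfl⟩ | ⟨s, h, rfl⟩)
    · exact h
    · exact (V_mid _ _).2 h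
    · exact h

theorem encard_Bw0 : Bw 0 = {[]} := by
  ext l
  simp [Bw, V_cons, V_zero]

theorem Aw_one : Aw 1 = {[0]} := by
  ext l
  simp only [Aw, Set.mem_ofPred_eq, Set.mem_singleton_iff]
  constructor
  · intro h; simpa using h.1
  · rintro rfl; exact V_F 1

theorem encard_Bw1 : Bw 1 = {[0]} := by
  ext l
  have h : V 1 l ↔ l = [0] := by
    have := congrArg (fun s => l ∈ s) Aw_one
    simpa [Aw] using this
  simp only [Bw, V_cons, h, Set.mem_ofPred_eq, Set.mem_singleton_iff]
  simp

theorem encard_Ew1 : Ew 1 = {[0]} := by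
  ext l
  have h : V 1 l ↔ l = [0] := by
    have := congrArg (fun s => l ∈ s) Aw_one
    simpa [Aw] using this
  simp only [Ew, V_snoc, h, Set.mem_ofPred_eq, Set.mem_singleton_iff]
  constructor
  · exact fun h => h.1
  · rintro rfl; simp

theorem encard_Bw2 : Bw 2 = {[1, 0], [0, 1]} := by
  ext l
  simp only [Bw, Set.mem_ofPred_eq, Set.mem_insert_iff, Set.mem_singleton_iff]
  constructor
  · intro h
    rw [V_cons] at h
    rcases V_cases h.1 with ⟨t, rfl⟩ | ⟨s, hs, rfl⟩ | ⟨m, u, hm, rfl⟩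
    · have h' : t ∈ Bw 1 := h.1
      rw [encard_Bw1] at h'
      left
      simpa using h'
    · have h' : s ∈ Ew 1 := h.1
      rw [encard_Ew1] at h'
      right
      simp at h'
      simp [h']
    · omega
  · rintro (rfl | rfl)
    · rw [V_cons]
      exact ⟨V_cons_F 1 (V_F 1), by simp⟩
    · exact V_cons_F 2 (V_F 2)

/-- Counting sequence. -/
def bs : ℕ → ℕ
  | 0 => 1
  | 1 => 1
  | 2 => 2
  | n + 3 => bs (n + 2) + bs n + 1

theorem encard_Bw (n : ℕ) : (Bw n).encard = bs n := by
  induction n using Nat.strong_induction_on with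
  | _ n ih =>
    match n with
    | 0 => simp [encard_Bw0, bs]
    | 1 => simp [encard_Bw1, bs]
    | 2 => rw [encard_Bw2, Set.encard_pair (by simp)]; rfl
    | n + 3 =>
      rw [Bw_rec, Set.encard_union_eq, Set.encard_union_eq, Set.encard_singleton,
        Function.Injective.encard_image, Function.Injective.encard_image, ih _ (by omega),
        ih _ (by omega), bs]
      · push_cast; ring
      · intro a b h; simpa using h
      · intro a b h; simpa using h
      · rw [Set.disjoint_singleton_right]
        rintro ⟨u, hu, h⟩
        simp only [List.cons.injEq, true_and] at h
        have h2 := (V_F (n + 1)).lt (x := n + 2)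
        have h3 := congrArg List.head? h
        cases hF : F (n + 1) with
        | nil =>
          rw [hF] at h
          simp at h
        | cons c t =>
          rw [hF] at h2 h
          simp at h
          simp at h2
          omega
      · rw [Set.disjoint_left]
        rintro _ ⟨t, ht, rfl⟩ (⟨u, hu, h⟩ | h)
        · simp at h
        · simp at h

theorem encard_Ew (n : ℕ) : (Ew (n + 1)).encard = (n + 1 : ℕ) := by
  induction n with
  | zero => simp [encard_Ew1]
  | succ n ih =>
    rw [Ew_rec, Set.encard_union_eq, Set.encard_singleton, Function.Injective.encard_image, ih]
    · push_cast; ring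
    · intro a b h; simpa using h
    · rw [Set.disjoint_singleton_right]
      rintro ⟨u, hu, h⟩
      have h1 := F_last (n + 1)
      have h2 := congrArg List.getLast? h
      rw [List.getLast?_concat, List.getLast?_cons] at h2
      cases hl : (F (n + 1)).getLast? with
      | none =>
        rw [List.getLast?_eq_none_iff] at hl
        have := (V_F (n + 1)).1.length_eq
        simp [hl] at this
      | some y =>
        have := h1 y hl
        simp [hl] at h2
        omega

theorem encard_Aw (n : ℕ) : (Aw (n + 3)).encard = (bs (n + 2) + bs n + (n + 2) : ℕ) := by
  rw [Aw_rec, Set.encard_union_eq, Set.encard_union_eq,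
    Function.Injective.encard_image, Function.Injective.encard_image,
    Function.Injective.encard_image, encard_Bw, encard_Bw, encard_Ew]
  · push_cast; ring
  · intro a b h; simpa using h
  · intro a b h; simpa using h
  · intro a b h; simpa using h
  · rw [Set.disjoint_left]
    rintro _ ⟨u, hu, rfl⟩ ⟨s, hs, h⟩
    have h2 := congrArg List.getLast? h
    dsimp only at h2
    rw [List.getLast?_concat, List.getLast?_cons_cons, List.getLast?_cons_cons] at h2
    have := V.lt hu (List.mem_of_getLast? h2.symm)
    omega
  · rw [Set.disjoint_left]
    rintro _ ⟨t, ht, rfl⟩ (⟨u, hu, h⟩ | ⟨s, hs, h⟩)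
    · simp at h
    · rcases s with _ | ⟨c, s⟩
      · have := (V.mem hs (x := 0) (by omega))
        simp at this
      · simp at h
        have := ((V_snoc _ _).1 hs).1.lt (x := c) (by simp)
        omega

theorem aCount_eq (n : ℕ) : aCount 2 n = (Aw n).ncard := by
  rw [aCount]
  change Set.ncard {π : Equiv.Perm (Fin n) | Avoids132 π ∧ MBounded 2 π} = _
  have hinj : Function.Injective
      (fun π : Equiv.Perm (Fin n) => List.ofFn (fun i => ((π i : Fin n) : ℕ))) := by
    intro π σ h
    have h' := List.ofFn_injective h
    ext i
    exact congrFun h' i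
  rw [← Set.ncard_image_of_injective _ hinj]
  congr 1
  have key : ∀ π : Equiv.Perm (Fin n), V n (List.ofFn (fun i => ((π i : Fin n) : ℕ))) ↔
      Avoids132 π ∧ MBounded 2 π := by
    intro π
    have hp : (List.ofFn (fun i => ((π i : Fin n) : ℕ))).Perm (List.range n) := by
      rw [List.perm_ext_iff_of_nodup _ List.nodup_range]
      · intro a
        simp only [List.mem_ofFn, List.mem_range]
        constructor
        · rintro ⟨i, rfl⟩; exact (π i).2
        · intro h; exact ⟨π.symm ⟨a, h⟩, by simp⟩
      · rw [List.nodup_ofFn]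
        exact Fin.val_injective.comp π.injective
    have h1 : Av (List.ofFn (fun i => ((π i : Fin n) : ℕ))) ↔ Avoids132 π := by
      rw [Av_iff, Avoids132]
      push Not
      constructor
      · intro h i j k hij hjk h1
        have := h i j k hij hjk (by simp)
        simp at this
        exact this h1
      · intro h i j k hij hjk hk
        simp at hk
        have := h ⟨i, by omega⟩ ⟨j, by omega⟩ ⟨k, by omega⟩ hij hjk
        simpa using this
    have h2 : (List.ofFn (fun i => ((π i : Fin n) : ℕ))).IsChain
        (fun a b => a ≤ b + 2 ∧ b ≤ a + 2) ↔ MBounded 2 π := by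
      rw [List.isChain_iff_getElem, MBounded]
      simp only [List.length_ofFn, List.getElem_ofFn, abs_le]
      refine forall_congr' fun i => forall_congr' fun h => ?_
      push_cast
      omega
    rw [V, h1, h2]
    tauto
  ext l
  simp only [Set.mem_image, Set.mem_ofPred_eq, Aw]
  constructor
  · rintro ⟨π, h, rfl⟩
    exact (key π).2 h
  · intro h
    have hlen : l.length = n := by simpa using h.1.length_eq
    let f : Fin n → Fin n := fun i => ⟨l[i.1]'(by omega), h.lt (List.getElem_mem _)⟩
    have hf : Function.Injective f := by
      intro i j hij
      simp only [f, Fin.mk.injEq] at hij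
      exact Fin.ext ((h.nodup.getElem_inj_iff).1 hij)
    have hl : List.ofFn (fun i => ((f i : Fin n) : ℕ)) = l := by
      apply List.ext_getElem
      · simp [hlen]
      · intro i h1 h2
        simp [f]
    refine ⟨Equiv.ofBijective f (Finite.injective_iff_bijective.1 hf), ?_, hl⟩
    rw [← key]
    simpa [hl] using h

theorem aCount_rec (n : ℕ) : aCount 2 (n + 3) = bs (n + 2) + bs n + (n + 2) := by
  rw [aCount_eq, Set.ncard, encard_Aw]
  rfl

theorem tend_zero (c : ℝ) (hc : 0 < c) (hc2 : 2 * c < 1) (y : ℕ → ℝ)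
    (hy : ∀ n, y (n + 2) = -c * (y (n + 1) + y n)) : Filter.Tendsto y Filter.atTop (nhds 0) := by
  set s := Real.sqrt (2 * c) with hs
  have hs0 : 0 < s := Real.sqrt_pos.2 (by linarith)
  have hs2 : s ^ 2 = 2 * c := Real.sq_sqrt (by linarith)
  have hs1 : s < 1 := by nlinarith
  set M := |y 0| + |y 1| / s with hM
  have hM0 : 0 ≤ M := by positivity
  have hb : ∀ n, |y n| ≤ M * s ^ n := by
    intro n
    induction n using Nat.twoStepInduction with
    | zero => simp [hM]; positivity
    | one =>
      have : M * s ^ 1 = |y 0| * s + |y 1| := by rw [hM]; field_simp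
      rw [this]
      have : 0 ≤ |y 0| * s := by positivity
      linarith
    | more n h0 h1 =>
      rw [hy, abs_mul, abs_neg, abs_of_pos hc]
      have h2 := abs_add_le (y (n + 1)) (y n)
      have h3 : 0 ≤ M * s ^ n := by positivity
      have e1 : M * s ^ (n + 1) = M * s ^ n * s := by ring
      have e2 : M * s ^ (n + 2) = M * s ^ n * (2 * c) := by rw [← hs2]; ring
      rw [e2]
      have : |y (n + 1) + y n| ≤ 2 * (M * s ^ n) := by nlinarith
      nlinarith
  refine squeeze_zero_norm (a := fun n => M * s ^ n) (fun n => by simpa using hb n) ?_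
  simpa using (tendsto_pow_atTop_nhds_zero_of_lt_one hs0.le hs1).const_mul M

theorem root_exists : ∃ ρ : ℝ, ρ ∈ Set.Ioo (0 : ℝ) 1 ∧ 1 - ρ - ρ ^ 3 = 0 ∧
      (∀ t : ℝ, t ∈ Set.Ioo (0 : ℝ) 1 → 1 - t - t ^ 3 = 0 → t = ρ) ∧ 1 / 2 < ρ := by
  have hc : ContinuousOn (fun x : ℝ => 1 - x - x ^ 3) (Set.Icc (1/2) 1) := by fun_prop
  have := intermediate_value_Ioo' (by norm_num : (1/2 : ℝ) ≤ 1) hc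
  obtain ⟨ρ, ⟨h1, h2⟩, h3⟩ := this (show (0 : ℝ) ∈ _ by constructor <;> norm_num)
  refine ⟨ρ, ⟨by linarith, h2⟩, h3, ?_, h1⟩
  rintro t ⟨ht0, ht1⟩ ht
  simp only at h3
  have h : (t - ρ) * (1 + t ^ 2 + t * ρ + ρ ^ 2) = 0 := by linear_combination h3 - ht
  rcases mul_eq_zero.1 h with h | h
  · linarith
  · nlinarith [mul_pos ht0 (by linarith : 0 < ρ)]

theorem tend_main (ρ : ℝ) (h0 : 1 / 2 < ρ) (h1 : ρ < 1) (hr : 1 - ρ - ρ ^ 3 = 0)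
    (b : ℕ → ℕ) (b0 : b 0 = 1) (b1 : b 1 = 1) (b2 : b 2 = 2)
    (hb : ∀ n, b (n + 3) = b (n + 2) + b n + 1) (a : ℕ → ℕ)
    (ha : ∀ n, a (n + 3) = b (n + 2) + b n + (n + 2)) :
    Filter.Tendsto (fun n : ℕ => (a n : ℝ) * ρ ^ n) Filter.atTop
        (nhds ((2 * ρ - 1) / ((1 - ρ) ^ 2 * (1 + 3 * ρ ^ 2)))) := by
  have hc : 0 < ρ ^ 3 := by positivity
  set x : ℕ → ℝ := fun n => ((b n : ℝ) + 1) * ρ ^ n with hx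
  set L : ℝ := x 2 + ρ ^ 3 * x 1 + ρ ^ 3 * x 0 with hL
  have hinv : ∀ n, x (n + 2) + ρ ^ 3 * x (n + 1) + ρ ^ 3 * x n = L := by
    intro n
    induction n with
    | zero => rfl
    | succ n ih =>
      rw [← ih]
      simp only [hx, hb]
      push_cast
      linear_combination (-(b (n+2) + 1) * ρ ^ (n + 2) : ℝ) * hr
  set y : ℕ → ℝ := fun n => x n - L / (1 + 2 * ρ ^ 3) with hy
  have hD : (1 + 2 * ρ ^ 3) ≠ 0 := by positivity
  have ht := tend_zero (ρ ^ 3) hc (by linarith) y (by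
    intro n
    simp only [hy]
    have e : L = L / (1 + 2 * ρ ^ 3) * (1 + 2 * ρ ^ 3) := by field_simp
    linear_combination hinv n + e)
  have hxt : Filter.Tendsto x Filter.atTop (nhds (L / (1 + 2 * ρ ^ 3))) := by
    have := ht.add_const (L / (1 + 2 * ρ ^ 3))
    simpa [hy] using this
  have hx2 := hxt.comp (Filter.tendsto_add_atTop_nat 2)
  have hn : Filter.Tendsto (fun n : ℕ => (n : ℝ) * ρ ^ n) Filter.atTop (nhds 0) :=
    tendsto_self_mul_const_pow_of_lt_one (by linarith) h1
  rw [← Filter.tendsto_add_atTop_iff_nat 3]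
  have := ((hx2.const_mul ρ).add (hxt.const_mul (ρ ^ 3))).add (hn.const_mul (ρ ^ 3))
  convert this using 1
  · ext n
    simp only [hx, ha, Function.comp]
    push_cast
    ring
  · congr 1
    have hL' : L = 3 * ρ ^ 2 + 2 * ρ ^ 4 + 2 * ρ ^ 3 := by
      rw [hL]; simp only [hx, b0, b1, b2]; push_cast; ring
    rw [hL']
    have h2 : 0 < 1 - ρ := by linarith
    have h3 : (1 + 3 * ρ ^ 2) ≠ 0 := by positivity
    rw [← mul_div_assoc, ← mul_div_assoc, mul_zero, add_zero, ← add_div, div_eq_div_iff (by positivity) hD]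
    linear_combination ((-1)*ρ^0 + (1)*ρ^1 + (1)*ρ^2 + (-5)*ρ^3 + (4)*ρ^4 + (-8)*ρ^5 + (5)*ρ^6 + (-6)*ρ^7 + (6)*ρ^8) * hr

theorem asymptotics_m_eq_two :
    ∃ ρ : ℝ, ρ ∈ Set.Ioo (0 : ℝ) 1 ∧ 1 - ρ - ρ ^ 3 = 0 ∧
      (∀ t : ℝ, t ∈ Set.Ioo (0 : ℝ) 1 → 1 - t - t ^ 3 = 0 → t = ρ) ∧
      1 / 2 < ρ ∧
      Filter.Tendsto (fun n : ℕ => (aCount 2 n : ℝ) * ρ ^ n) Filter.atTop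
        (nhds ((2 * ρ - 1) / ((1 - ρ) ^ 2 * (1 + 3 * ρ ^ 2)))) := by
  obtain ⟨ρ, h1, h2, h3, h4⟩ := root_exists
  exact ⟨ρ, h1, h2, h3, h4, tend_main ρ h4 h1.2 h2 bs rfl rfl rfl (fun _ => rfl) _ aCount_rec⟩
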